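/- Let $h:\mathbb{R}^3\times\mathbb{R}^3\to\mathbb{R}$, $(y,\xi)\mapsto h(y,\xi)$, be $C^2$, with Hessian blocks $(\nabla_{yy}h)_{ij}=\partial^2h/\partial y_i\partial y_j$, $(\nabla_{y\xi}h)_{ij}=\partial^2h/\partial y_i\partial\xi_j$, $\nabla_{\xi y}h=(\nabla_{y\xi}h)^T$, $(\nabla_{\xi\xi}h)_{ij}=\partial^2h/\partial\xi_i\partial\xi_j$. Let $\varphi=(\varphi_1,\varphi_2,\varphi_3):\mathbb{R}\times\mathbb{R}^3\times\mathbb{R}^3\to\mathbb{C}^3$ be $C^2$ with each component solving the Liouville equation $\partial_t\varphi_k+\nabla_\xi h\cdot\nabla_y\varphi_k-\nabla_yh\cdot\nabla_\xi\varphi_k=0$. Write $\nabla_y\varphi$ and $\nabla_\xi\varphi$ for the $3\times3$ matrices whose columns are the gradients of the components, $(\nabla_y\varphi)_{ij}=\partial\varphi_j/\partial y_i$ and $(\nabla_\xi\varphi)_{ij}=\partial\varphi_j/\partial\xi_i$. Let $t\mapsto(y(t),\xi(t))$ be a bicharacteristic ($y'=\nabla_\xi h$, $\xi'=-\nabla_yh$)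 on an interval $I\subseteq\mathbb{R}$, and suppose that $\nabla_\xi\varphi$ evaluated along the curve, at $(t,y(t),\xi(t))$, is invertible for every $t\in I$. Then $M(t):=-(\nabla_y\varphi)(\nabla_\xi\varphi)^{-1}$, evaluated at $(t,y(t),\xi(t))$, satisfies on $I$ the Riccati equation $$M'=-\nabla_{yy}h-(\nabla_{y\xi}h)M-M(\nabla_{\xi y}h)-M(\nabla_{\xi\xi}h)M$$ along the curve. Moreover, the Gaussian beam Hessian is constructed in this way from the derivatives of the level set functions: if $0\in I$ and $\varphi(0,y,\xi)=-iy+(\xi-\nabla S(y))$ for all $y,\xi$, with $S:\mathbb{R}^3\to\mathbb{R}$ of class $C^2$, then $M(0)=\nabla^2S(y(0))+i\,\mathrm{Id}$, and every solution on $I$ of this Riccati equation along the curve with that initial value coincides with $M$ on $I$. -/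

import Mathlib

/-- Points of `ℝ³`. -/
abbrev V3 := Fin 3 → ℝ

/-- The coordinate direction `i` in the `y`-slot of `ℝ³ × ℝ³`. -/
def ey (i : Fin 3) : V3 × V3 := (Pi.single i 1, 0)

/-- The coordinate direction `i` in the `ξ`-slot of `ℝ³ × ℝ³`. -/
def eXi (i : Fin 3) : V3 × V3 := (0, Pi.single i 1)

/-- `∇_y h ∈ ℝ³`. -/
noncomputable def gradY (h : V3 × V3 → ℝ) (q : V3 × V3) : V3 :=
  fun i => fderiv ℝ h q (ey i)

/-- `∇_ξ h ∈ ℝ³`. -/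
noncomputable def gradXi (h : V3 × V3 → ℝ) (q : V3 × V3) : V3 :=
  fun i => fderiv ℝ h q (eXi i)

/-- `(∇_{yy}h)_{ij} = ∂²h/∂y_i∂y_j`. -/
noncomputable def Hyy (h : V3 × V3 → ℝ) (p : V3 × V3) : Matrix (Fin 3) (Fin 3) ℝ :=
  Matrix.of fun i j => fderiv ℝ (fun q => fderiv ℝ h q (ey j)) p (ey i)

/-- `(∇_{yξ}h)_{ij} = ∂²h/∂y_i∂ξ_j`. -/
noncomputable def Hyxi (h : V3 × V3 → ℝ) (p : V3 × V3) : Matrix (Fin 3) (Fin 3) ℝ :=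
  Matrix.of fun i j => fderiv ℝ (fun q => fderiv ℝ h q (eXi j)) p (ey i)

/-- `(∇_{ξy}h)_{ij} = ∂²h/∂ξ_i∂y_j`; for `C²` functions this is `(∇_{yξ}h)ᵀ`. -/
noncomputable def Hxiy (h : V3 × V3 → ℝ) (p : V3 × V3) : Matrix (Fin 3) (Fin 3) ℝ :=
  Matrix.of fun i j => fderiv ℝ (fun q => fderiv ℝ h q (ey j)) p (eXi i)

/-- `(∇_{ξξ}h)_{ij} = ∂²h/∂ξ_i∂ξ_j`. -/
noncomputable def Hxixi (h : V3 × V3 → ℝ) (p : V3 × V3) : Matrix (Fin 3) (Fin 3) ℝ :=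
  Matrix.of fun i j => fderiv ℝ (fun q => fderiv ℝ h q (eXi j)) p (eXi i)

/-- `∇_yφ` in the gradient convention: `(∇_yφ)_{ij} = ∂φ_j/∂y_i`, that is, the `j`-th column is
the gradient `∇_yφ_j`. -/
noncomputable def nablaY (φ : ℝ × V3 × V3 → Fin 3 → ℂ) (p : ℝ × V3 × V3) :
    Matrix (Fin 3) (Fin 3) ℂ :=
  Matrix.of fun i j => fderiv ℝ φ p (0, ey i) j

/-- `∇_ξφ` in the gradient convention: `(∇_ξφ)_{ij} = ∂φ_j/∂ξ_i`, that is, the `j`-th column is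
the gradient `∇_ξφ_j`. -/
noncomputable def nablaXi (φ : ℝ × V3 × V3 → Fin 3 → ℂ) (p : ℝ × V3 × V3) :
    Matrix (Fin 3) (Fin 3) ℂ :=
  Matrix.of fun i j => fderiv ℝ φ p (0, eXi i) j

/-- Each component of `φ` solves the Liouville equation
`∂_tφ_k + ∇_ξh · ∇_yφ_k − ∇_yh · ∇_ξφ_k = 0`. -/
def SolvesLiouville (h : V3 × V3 → ℝ) (φ : ℝ × V3 × V3 → Fin 3 → ℂ) : Prop :=
  ∀ (p : ℝ × V3 × V3) (k : Fin 3),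
    fderiv ℝ φ p (1, 0) k
      + ∑ i, ((gradXi h p.2 i : ℝ) : ℂ) * fderiv ℝ φ p (0, ey i) k
      - ∑ i, ((gradY h p.2 i : ℝ) : ℂ) * fderiv ℝ φ p (0, eXi i) k = 0

/-- `t ↦ (y t, ξ t)` is a bicharacteristic of `h` on `I`: `y' = ∇_ξh`, `ξ' = −∇_yh`
(one-sided derivatives at endpoints belonging to `I`). -/
def IsBicharacteristicOn (h : V3 × V3 → ℝ) (y ξ : ℝ → V3) (I : Set ℝ) : Prop :=
  ∀ t ∈ I, HasDerivWithinAt y (gradXi h (y t, ξ t)) I t ∧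
    HasDerivWithinAt ξ (-gradY h (y t, ξ t)) I t

/-- The right-hand side `−∇_{yy}h − (∇_{yξ}h) M − M (∇_{ξy}h) − M (∇_{ξξ}h) M`
at the phase-space point `p`. -/
noncomputable def riccatiRHS (h : V3 × V3 → ℝ) (p : V3 × V3) (M : Matrix (Fin 3) (Fin 3) ℂ) :
    Matrix (Fin 3) (Fin 3) ℂ :=
  -(Hyy h p).map Complex.ofReal
    - (Hyxi h p).map Complex.ofReal * M
    - M * (Hxiy h p).map Complex.ofReal
    - M * (Hxixi h p).map Complex.ofReal * M

/-- `M` satisfies the Riccati equation along the curve `(y, ξ)` on `I` (entrywise derivative,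
one-sided at endpoints belonging to `I`). -/
def SolvesRiccatiOn (h : V3 × V3 → ℝ) (y ξ : ℝ → V3) (I : Set ℝ)
    (M : ℝ → Matrix (Fin 3) (Fin 3) ℂ) : Prop :=
  ∀ t ∈ I, ∀ i j : Fin 3,
    HasDerivWithinAt (fun τ => M τ i j) (riccatiRHS h (y t, ξ t) (M t) i j) I t

/-- `M(t) = −(∇_yφ)(∇_ξφ)⁻¹` at `(t, y t, ξ t)`. -/
noncomputable def levelSetHessian (φ : ℝ × V3 × V3 → Fin 3 → ℂ) (y ξ : ℝ → V3) (t : ℝ) :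
    Matrix (Fin 3) (Fin 3) ℂ :=
  -(nablaY φ (t, y t, ξ t) * (nablaXi φ (t, y t, ξ t))⁻¹)

/-- `∇S ∈ ℝ³`. -/
noncomputable def gradS (S : V3 → ℝ) (x : V3) : V3 :=
  fun i => fderiv ℝ S x (Pi.single i 1)

/-- `(∇²S)_{ij} = ∂²S/∂x_i∂x_j`. -/
noncomputable def hessS (S : V3 → ℝ) (x : V3) : Matrix (Fin 3) (Fin 3) ℝ :=
  Matrix.of fun i j => fderiv ℝ (fun z => gradS S z j) x (Pi.single i 1)

/-- The initial beam Hessian `∇²S + i Id`. -/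
noncomputable def initialHessian (S : V3 → ℝ) (x : V3) : Matrix (Fin 3) (Fin 3) ℂ :=
  (hessS S x).map Complex.ofReal + Complex.I • (1 : Matrix (Fin 3) (Fin 3) ℂ)

open Set Matrix

section RiccatiODE

variable {E : Type*} [NormedRing E] [NormedAlgebra ℝ E]

/-- If `A' = P A + Q B` and `B' = R A + T B` with `B` invertible, then `-A B⁻¹` solves the
associated Riccati equation. -/
theorem hasDerivWithinAt_neg_mul_ringInverse [HasSummableGeomSeries E]
    {A B : ℝ → E} {P Q R T : E} {I : Set ℝ} {t : ℝ}
    (hA : HasDerivWithinAt A (P * A t + Q * B t) I t)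
    (hB : HasDerivWithinAt B (R * A t + T * B t) I t) (hu : IsUnit (B t)) :
    HasDerivWithinAt (fun τ => -(A τ * Ring.inverse (B τ)))
      (-Q + P * -(A t * Ring.inverse (B t)) - -(A t * Ring.inverse (B t)) * T
        + -(A t * Ring.inverse (B t)) * R * -(A t * Ring.inverse (B t))) I t := by
  have h1 : B t * Ring.inverse (B t) = 1 := Ring.mul_inverse_cancel _ hu
  obtain ⟨u, hu⟩ := hu
  have hinv : HasDerivWithinAt (fun τ => Ring.inverse (B τ))
      (-(Ring.inverse (B t) * (R * A t + T * B t) * Ring.inverse (B t))) I t := by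
    have hr := hasFDerivAt_ringInverse (𝕜 := ℝ) u
    rw [← Ring.inverse_unit, hu] at hr
    exact (hr.comp_hasDerivWithinAt t hB).congr_deriv
      (by simp [ContinuousLinearMap.mulLeftRight_apply])
  refine (hA.mul hinv).neg.congr_deriv ?_
  have h2 : Q * B t * Ring.inverse (B t) = Q := by rw [mul_assoc, h1, mul_one]
  have h3 : A t * (Ring.inverse (B t) * (T * B t) * Ring.inverse (B t))
      = A t * Ring.inverse (B t) * T := by
    simp only [mul_assoc, h1, mul_one]
  simp only [mul_add, add_mul, mul_neg, neg_mul, h2, h3, neg_neg, neg_add]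
  noncomm_ring

/-- The zero curve is the only solution of `Z' = W Z` on an interval with `Z 0 = 0`, if `W` is
continuous. -/
theorem eq_zero_of_linear_ode {W Z : ℝ → E} {I : Set ℝ} (hI : I.OrdConnected) {a : ℝ} (ha : a ∈ I)
    (hW : ContinuousOn W I) (hZ : ∀ t ∈ I, HasDerivWithinAt Z (W t * Z t) I t)
    (hZa : Z a = 0) : ∀ t ∈ I, Z t = 0 := by
  have hcont : ContinuousOn Z I := fun t ht => (hZ t ht).continuousWithinAt
  have lip : ∀ (b c : ℝ), Icc b c ⊆ I →
      ∃ K : NNReal, ∀ t ∈ Icc b c, LipschitzOnWith K (fun z => W t * z) univ := by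
    intro b c hbc
    obtain ⟨C, hC⟩ := isCompact_Icc.exists_bound_of_continuousOn (hW.mono hbc)
    refine ⟨C.toNNReal, fun t ht => LipschitzOnWith.of_dist_le_mul fun x _ z _ => ?_⟩
    rw [dist_eq_norm, dist_eq_norm, ← mul_sub]
    refine (norm_mul_le _ _).trans (mul_le_mul_of_nonneg_right ?_ (norm_nonneg _))
    exact (hC t ht).trans (Real.le_coe_toNNReal C)
  intro t ht
  rcases le_total a t with hat | hat
  · have hsub : Icc a t ⊆ I := hI.out ha ht
    obtain ⟨K, hK⟩ := lip a t hsub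
    refine ODE_solution_unique_of_mem_Icc_right (v := fun s z => W s * z) (s := fun _ => univ)
      (g := fun _ => 0) (fun s hs => hK s (Ico_subset_Icc_self hs)) (hcont.mono hsub) ?_
      (fun _ _ => mem_univ _) continuousOn_const ?_ (fun _ _ => mem_univ _) hZa ⟨hat, le_rfl⟩
    · intro s hs
      have := (hZ s (hsub (Ico_subset_Icc_self hs))).mono hsub
      exact this.mono_of_mem_nhdsWithin (Icc_mem_nhdsGE_of_mem hs)
    · intro s _
      simpa using hasDerivWithinAt_const s (Ici s) (0 : E)
  · have hsub : Icc t a ⊆ I := hI.out ht ha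
    obtain ⟨K, hK⟩ := lip t a hsub
    refine ODE_solution_unique_of_mem_Icc_left (v := fun s z => W s * z) (s := fun _ => univ)
      (g := fun _ => 0) (fun s hs => hK s (Ioc_subset_Icc_self hs)) (hcont.mono hsub) ?_
      (fun _ _ => mem_univ _) continuousOn_const ?_ (fun _ _ => mem_univ _) hZa ⟨le_rfl, hat⟩
    · intro s hs
      have := (hZ s (hsub (Ioc_subset_Icc_self hs))).mono hsub
      exact this.mono_of_mem_nhdsWithin (Icc_mem_nhdsLE_of_mem hs)
    · intro s _
      simpa using hasDerivWithinAt_const s (Iic s) (0 : E)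

/-- Uniqueness for the Riccati equation, given a linearization `(A, B)` with `B` invertible. -/
theorem riccati_eq_neg_mul_ringInverse
    {A B N P Q R T : ℝ → E} {I : Set ℝ} (hI : I.OrdConnected) {a : ℝ} (ha : a ∈ I)
    (hA : ∀ t ∈ I, HasDerivWithinAt A (P t * A t + Q t * B t) I t)
    (hB : ∀ t ∈ I, HasDerivWithinAt B (R t * A t + T t * B t) I t)
    (hu : ∀ t ∈ I, IsUnit (B t)) (hP : ContinuousOn P I) (hR : ContinuousOn R I)
    (hN : ∀ t ∈ I, HasDerivWithinAt N (-Q t + P t * N t - N t * T t + N t * R t * N t) I t)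
    (hNa : N a = -(A a * Ring.inverse (B a))) :
    ∀ t ∈ I, N t = -(A t * Ring.inverse (B t)) := by
  have hNc : ContinuousOn N I := fun t ht => (hN t ht).continuousWithinAt
  have hZ : ∀ t ∈ I, A t + N t * B t = 0 := by
    refine eq_zero_of_linear_ode hI ha (W := fun t => P t + N t * R t)
      (Z := fun t => A t + N t * B t) (hP.add (hNc.mul hR)) ?_ ?_
    · intro t ht
      refine ((hA t ht).add ((hN t ht).mul (hB t ht))).congr_deriv ?_
      noncomm_ring
    · simp [hNa, mul_assoc, Ring.inverse_mul_cancel _ (hu a ha)]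
  intro t ht
  rw [eq_neg_of_add_eq_zero_left (hZ t ht), neg_mul, neg_neg, mul_assoc,
    Ring.mul_inverse_cancel _ (hu t ht), mul_one]

end RiccatiODE

section MatrixRiccati

attribute [local instance] Matrix.linftyOpNormedRing Matrix.linftyOpNormedAlgebra

variable {n : Type*} [Fintype n]

/-- A matrix-valued curve is differentiable iff its entries are. -/
theorem Matrix.hasDerivWithinAt_iff_entries
    {M : ℝ → Matrix n n ℂ} {M' : Matrix n n ℂ} {I : Set ℝ} {t : ℝ} :
    HasDerivWithinAt M M' I t ↔ ∀ i j, HasDerivWithinAt (fun τ => M τ i j) (M' i j) I t :=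
  Iff.trans (hasDerivWithinAt_pi (E' := fun _ : n => n → ℂ) (φ := M) (φ' := M'))
    (forall_congr' fun _ => hasDerivWithinAt_pi)

theorem Matrix.hasDerivWithinAt_neg_mul_inv [DecidableEq n]
    {A B : ℝ → Matrix n n ℂ} {P Q R T : Matrix n n ℂ} {I : Set ℝ} {t : ℝ}
    (hA : ∀ i j, HasDerivWithinAt (fun τ => A τ i j) ((P * A t + Q * B t) i j) I t)
    (hB : ∀ i j, HasDerivWithinAt (fun τ => B τ i j) ((R * A t + T * B t) i j) I t)
    (hu : IsUnit (B t)) (i j : n) :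
    HasDerivWithinAt (fun τ => (-(A τ * (B τ)⁻¹)) i j)
      ((-Q + P * -(A t * (B t)⁻¹) - -(A t * (B t)⁻¹) * T
        + -(A t * (B t)⁻¹) * R * -(A t * (B t)⁻¹)) i j) I t := by
  simp only [Matrix.nonsing_inv_eq_ringInverse]
  exact Matrix.hasDerivWithinAt_iff_entries.1 (hasDerivWithinAt_neg_mul_ringInverse
    (Matrix.hasDerivWithinAt_iff_entries.2 hA) (Matrix.hasDerivWithinAt_iff_entries.2 hB) hu) i j

theorem Matrix.riccati_eq_neg_mul_inv [DecidableEq n]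
    {A B N P Q R T : ℝ → Matrix n n ℂ} {I : Set ℝ} (hI : I.OrdConnected) {a : ℝ} (ha : a ∈ I)
    (hA : ∀ t ∈ I, ∀ i j,
      HasDerivWithinAt (fun τ => A τ i j) ((P t * A t + Q t * B t) i j) I t)
    (hB : ∀ t ∈ I, ∀ i j,
      HasDerivWithinAt (fun τ => B τ i j) ((R t * A t + T t * B t) i j) I t)
    (hu : ∀ t ∈ I, IsUnit (B t)) (hP : ContinuousOn P I) (hR : ContinuousOn R I)
    (hN : ∀ t ∈ I, ∀ i j, HasDerivWithinAt (fun τ => N τ i j)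
      ((-Q t + P t * N t - N t * T t + N t * R t * N t) i j) I t)
    (hNa : N a = -(A a * (B a)⁻¹)) : ∀ t ∈ I, N t = -(A t * (B t)⁻¹) := by
  simp only [Matrix.nonsing_inv_eq_ringInverse] at hNa ⊢
  exact riccati_eq_neg_mul_ringInverse hI ha
    (fun t ht => Matrix.hasDerivWithinAt_iff_entries.2 (hA t ht))
    (fun t ht => Matrix.hasDerivWithinAt_iff_entries.2 (hB t ht)) hu hP hR
    (fun t ht => Matrix.hasDerivWithinAt_iff_entries.2 (hN t ht)) hNa

end MatrixRiccati

/-- The Hamiltonian vector field `(∇_ξh, -∇_yh)`. -/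
noncomputable def hamiltonianField (h : V3 × V3 → ℝ) (q : V3 × V3) : V3 × V3 :=
  (gradXi h q, -gradY h q)

theorem sum_smul_ey_add_sum_smul_eXi (w : V3 × V3) :
    ∑ i, w.1 i • ey i + ∑ i, w.2 i • eXi i = w := by
  refine Prod.ext ?_ ?_ <;> funext k <;>
    simp [ey, eXi, Prod.fst_sum, Prod.snd_sum, Finset.sum_apply, Pi.single_apply]

/-- Expansion of a phase-space directional derivative in coordinate directions. -/
theorem clm_apply_phase (L : ℝ × V3 × V3 →L[ℝ] (Fin 3 → ℂ)) (w : V3 × V3) (k : Fin 3) :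
    L (0, w) k = ∑ i, ((w.1 i : ℝ) : ℂ) * L (0, ey i) k
      + ∑ i, ((w.2 i : ℝ) : ℂ) * L (0, eXi i) k := by
  have hw : L (0, w) = L.comp (ContinuousLinearMap.inr ℝ ℝ (V3 × V3)) w := rfl
  rw [hw]
  conv_lhs => rw [← sum_smul_ey_add_sum_smul_eXi w, map_add, map_sum, map_sum]
  simp [Finset.sum_apply]

theorem differentiable_fderiv_apply {E F : Type*} [NormedAddCommGroup E] [NormedSpace ℝ E]
    [NormedAddCommGroup F] [NormedSpace ℝ F] {f : E → F} (hf : ContDiff ℝ 2 f) (v : E) :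
    Differentiable ℝ (fun q => fderiv ℝ f q v) :=
  ((hf.fderiv_right (m := 1) (by norm_num)).clm_apply contDiff_const).differentiable (by norm_num)

theorem differentiable_hamiltonianField {h : V3 × V3 → ℝ} (hh : ContDiff ℝ 2 h) :
    Differentiable ℝ (hamiltonianField h) :=
  (differentiable_pi.2 fun i => differentiable_fderiv_apply hh (eXi i)).prodMk
    (differentiable_pi.2 fun i => differentiable_fderiv_apply hh (ey i)).neg

theorem fderiv_hamiltonianField_fst {h : V3 × V3 → ℝ} (hh : ContDiff ℝ 2 h) (q v : V3 × V3)
    (i : Fin 3) : (fderiv ℝ (hamiltonianField h) q v).1 i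
      = fderiv ℝ (fun p => fderiv ℝ h p (eXi i)) q v := by
  let L : V3 × V3 →L[ℝ] ℝ :=
    (ContinuousLinearMap.proj i).comp (ContinuousLinearMap.fst ℝ V3 V3)
  have h1 := (L.hasFDerivAt.comp q (differentiable_hamiltonianField hh q).hasFDerivAt).fderiv
  have h2 : (L ∘ hamiltonianField h) = fun p => fderiv ℝ h p (eXi i) := rfl
  rw [h2] at h1
  rw [h1]
  rfl

theorem fderiv_hamiltonianField_snd {h : V3 × V3 → ℝ} (hh : ContDiff ℝ 2 h) (q v : V3 × V3)
    (i : Fin 3) : (fderiv ℝ (hamiltonianField h) q v).2 i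
      = -fderiv ℝ (fun p => fderiv ℝ h p (ey i)) q v := by
  let L : V3 × V3 →L[ℝ] ℝ :=
    (ContinuousLinearMap.proj i).comp (ContinuousLinearMap.snd ℝ V3 V3)
  have h1 := (L.hasFDerivAt.comp q (differentiable_hamiltonianField hh q).hasFDerivAt).fderiv
  have h2 : (L ∘ hamiltonianField h) = fun p => -fderiv ℝ h p (ey i) := rfl
  rw [h2, fderiv_fun_neg] at h1
  rw [← _root_.neg_apply, h1]
  rfl

/-- The Liouville equation says that the derivative of `φ` along `(1, X_h)` vanishes. -/
theorem SolvesLiouville.fderiv_apply_eq_zero {h : V3 × V3 → ℝ}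
    {φ : ℝ × V3 × V3 → Fin 3 → ℂ} (hl : SolvesLiouville h φ) (p : ℝ × V3 × V3) :
    fderiv ℝ φ p (1, hamiltonianField h p.2) = 0 := by
  funext k
  have hsplit : ((1 : ℝ), hamiltonianField h p.2) = (1, 0) + (0, hamiltonianField h p.2) := by
    simp
  rw [hsplit, map_add, Pi.add_apply, clm_apply_phase, Pi.zero_apply, ← hl p k]
  simp [hamiltonianField]
  ring

/-- Phase-space derivatives of a Liouville solution satisfy the linearized equation along a
bicharacteristic. -/
theorem SolvesLiouville.hasDerivWithinAt_fderiv {h : V3 × V3 → ℝ} (hh : ContDiff ℝ 2 h)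
    {φ : ℝ × V3 × V3 → Fin 3 → ℂ} (hφ : ContDiff ℝ 2 φ) (hl : SolvesLiouville h φ)
    {I : Set ℝ} {y ξ : ℝ → V3} (hbi : IsBicharacteristicOn h y ξ I) {t : ℝ} (ht : t ∈ I)
    (v : V3 × V3) :
    HasDerivWithinAt (fun τ => fderiv ℝ φ (τ, y τ, ξ τ) (0, v))
      (-fderiv ℝ φ (t, y t, ξ t) (0, fderiv ℝ (hamiltonianField h) (y t, ξ t) v)) I t := by
  set p : ℝ × V3 × V3 := (t, y t, ξ t) with hp
  have hdiff : DifferentiableAt ℝ (fderiv ℝ φ) p :=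
    (hφ.fderiv_right (m := 1) (by norm_num)).differentiable (by norm_num) p
  have hγ : HasDerivWithinAt (fun τ => (τ, y τ, ξ τ)) ((1 : ℝ), hamiltonianField h (y t, ξ t)) I t :=
    (hasDerivWithinAt_id t I).prodMk ((hbi t ht).1.prodMk (hbi t ht).2)
  have h1 : HasDerivWithinAt (fun τ => fderiv ℝ φ (τ, y τ, ξ τ))
      (fderiv ℝ (fderiv ℝ φ) p (1, hamiltonianField h (y t, ξ t))) I t :=
    hdiff.hasFDerivAt.comp_hasDerivWithinAt t hγ
  have h2 := h1.clm_apply (hasDerivWithinAt_const t I ((0 : ℝ), v))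
  have hX : HasFDerivAt (fun q : ℝ × V3 × V3 => ((1 : ℝ), hamiltonianField h q.2))
      ((0 : ℝ × V3 × V3 →L[ℝ] ℝ).prod ((fderiv ℝ (hamiltonianField h) p.2).comp
        (ContinuousLinearMap.snd ℝ ℝ (V3 × V3)))) p :=
    (hasFDerivAt_const _ _).prodMk
      ((differentiable_hamiltonianField hh p.2).hasFDerivAt.comp p hasFDerivAt_snd)
  have h3 := hdiff.hasFDerivAt.clm_apply hX
  have h4 : (fun q : ℝ × V3 × V3 => fderiv ℝ φ q (1, hamiltonianField h q.2)) = fun _ => 0 :=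
    funext hl.fderiv_apply_eq_zero
  rw [h4] at h3
  have h5 := DFunLike.congr_fun (h3.unique (hasFDerivAt_const 0 p)) ((0 : ℝ), v)
  have hsymm : IsSymmSndFDerivAt ℝ φ p := hφ.contDiffAt.isSymmSndFDerivAt (by simp)
  refine h2.congr_deriv ?_
  simp only [_root_.add_apply, ContinuousLinearMap.flip_apply,
    ContinuousLinearMap.comp_apply, ContinuousLinearMap.prod_apply,
    _root_.zero_apply, ContinuousLinearMap.coe_snd'] at h5
  rw [map_zero, add_zero, hsymm]
  exact (neg_eq_of_add_eq_zero_right h5).symm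

section LevelSet

variable {h : V3 × V3 → ℝ} {φ : ℝ × V3 × V3 → Fin 3 → ℂ} {I : Set ℝ} {y ξ : ℝ → V3}

theorem SolvesLiouville.hasDerivWithinAt_nablaY (hh : ContDiff ℝ 2 h) (hφ : ContDiff ℝ 2 φ)
    (hl : SolvesLiouville h φ) (hbi : IsBicharacteristicOn h y ξ I) {t : ℝ} (ht : t ∈ I)
    (i j : Fin 3) :
    HasDerivWithinAt (fun τ => nablaY φ (τ, y τ, ξ τ) i j)
      ((-(Hyxi h (y t, ξ t)).map Complex.ofReal * nablaY φ (t, y t, ξ t)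
        + (Hyy h (y t, ξ t)).map Complex.ofReal * nablaXi φ (t, y t, ξ t)) i j) I t := by
  have := hasDerivWithinAt_pi.1 (hl.hasDerivWithinAt_fderiv hh hφ hbi ht (ey i)) j
  refine this.congr_deriv ?_
  rw [Pi.neg_apply, clm_apply_phase]
  simp only [fderiv_hamiltonianField_fst hh, fderiv_hamiltonianField_snd hh]
  simp [Matrix.mul_apply, Hyxi, Hyy, nablaY, nablaXi, Finset.sum_neg_distrib]
  ring

theorem SolvesLiouville.hasDerivWithinAt_nablaXi (hh : ContDiff ℝ 2 h) (hφ : ContDiff ℝ 2 φ)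
    (hl : SolvesLiouville h φ) (hbi : IsBicharacteristicOn h y ξ I) {t : ℝ} (ht : t ∈ I)
    (i j : Fin 3) :
    HasDerivWithinAt (fun τ => nablaXi φ (τ, y τ, ξ τ) i j)
      ((-(Hxixi h (y t, ξ t)).map Complex.ofReal * nablaY φ (t, y t, ξ t)
        + (Hxiy h (y t, ξ t)).map Complex.ofReal * nablaXi φ (t, y t, ξ t)) i j) I t := by
  have := hasDerivWithinAt_pi.1 (hl.hasDerivWithinAt_fderiv hh hφ hbi ht (eXi i)) j
  refine this.congr_deriv ?_
  rw [Pi.neg_apply, clm_apply_phase]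
  simp only [fderiv_hamiltonianField_fst hh, fderiv_hamiltonianField_snd hh]
  simp [Matrix.mul_apply, Hxixi, Hxiy, nablaY, nablaXi, Finset.sum_neg_distrib]
  ring

theorem riccatiRHS_eq (h : V3 × V3 → ℝ) (p : V3 × V3) (M : Matrix (Fin 3) (Fin 3) ℂ) :
    riccatiRHS h p M = -(Hyy h p).map Complex.ofReal + -(Hyxi h p).map Complex.ofReal * M
      - M * (Hxiy h p).map Complex.ofReal + M * -(Hxixi h p).map Complex.ofReal * M := by
  simp only [riccatiRHS, neg_mul, mul_neg]
  abel

theorem IsBicharacteristicOn.continuousOn (hbi : IsBicharacteristicOn h y ξ I) :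
    ContinuousOn (fun t => (y t, ξ t)) I := fun t ht =>
  (hbi t ht).1.continuousWithinAt.prodMk (hbi t ht).2.continuousWithinAt

theorem continuous_fderiv_fderiv_apply {E : Type*} [NormedAddCommGroup E] [NormedSpace ℝ E]
    {f : E → ℝ} (hf : ContDiff ℝ 2 f) (v w : E) :
    Continuous (fun q => fderiv ℝ (fun p => fderiv ℝ f p v) q w) :=
  (((hf.fderiv_right (m := 1) (by norm_num)).clm_apply contDiff_const).continuous_fderiv
    (by norm_num)).clm_apply continuous_const

theorem continuous_Hyxi (hh : ContDiff ℝ 2 h) : Continuous (Hyxi h) :=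
  continuous_matrix fun i j => continuous_fderiv_fderiv_apply hh (eXi j) (ey i)

theorem continuous_Hxixi (hh : ContDiff ℝ 2 h) : Continuous (Hxixi h) :=
  continuous_matrix fun i j => continuous_fderiv_fderiv_apply hh (eXi j) (eXi i)

variable {S : V3 → ℝ}

/-- The phase-space derivative of the level set initial data. -/
theorem fderiv_levelSet_initial (hφ : ContDiff ℝ 2 φ) (hS : ContDiff ℝ 2 S)
    (h0 : ∀ (x η : V3) (k : Fin 3),
      φ (0, x, η) k = -Complex.I * ((x k : ℝ) : ℂ) + ((η k - gradS S x k : ℝ) : ℂ))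
    (q v : V3 × V3) (k : Fin 3) :
    fderiv ℝ φ (0, q) (0, v) k = -Complex.I * ((v.1 k : ℝ) : ℂ)
      + ((v.2 k - fderiv ℝ (fun z => gradS S z k) q.1 v.1 : ℝ) : ℂ) := by
  have hφd : HasFDerivAt φ (fderiv ℝ φ (0, q)) (0, q) :=
    (hφ.differentiable (by norm_num) _).hasFDerivAt
  have hline : HasDerivAt (fun s : ℝ => ((0 : ℝ), q + s • v)) (0, v) 0 := by
    simpa using (hasDerivAt_const (0 : ℝ) (0 : ℝ)).prodMk
      (((hasDerivAt_id (0 : ℝ)).smul_const v).const_add q)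
  have hl := hasDerivAt_pi.1
    (HasFDerivAt.comp_hasDerivAt (0 : ℝ) (l := φ) (by simpa using hφd) hline) k
  have hgrad : HasFDerivAt (fun z => gradS S z k) (fderiv ℝ (fun z => gradS S z k) q.1) q.1 :=
    (differentiable_fderiv_apply hS (Pi.single k 1) q.1).hasFDerivAt
  have hy : HasDerivAt (fun s : ℝ => q.1 + s • v.1) v.1 0 := by
    simpa using ((hasDerivAt_id (0 : ℝ)).smul_const v.1).const_add q.1
  have hη : HasDerivAt (fun s : ℝ => q.2 + s • v.2) v.2 0 := by
    simpa using ((hasDerivAt_id (0 : ℝ)).smul_const v.2).const_add q.2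
  have hg := HasFDerivAt.comp_hasDerivAt (0 : ℝ) (l := fun z => gradS S z k)
    (by simpa using hgrad) hy
  have hr := ((hasDerivAt_pi.1 hy k).ofReal_comp.const_mul (-Complex.I)).add
    (((hasDerivAt_pi.1 hη k).sub hg).ofReal_comp)
  refine hl.unique (hr.congr_of_eventuallyEq (Filter.Eventually.of_forall fun s => ?_))
  exact h0 (q.1 + s • v.1) (q.2 + s • v.2) k

theorem levelSetHessian_zero (hφ : ContDiff ℝ 2 φ) (hS : ContDiff ℝ 2 S)
    (h0 : ∀ (x η : V3) (k : Fin 3),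
      φ (0, x, η) k = -Complex.I * ((x k : ℝ) : ℂ) + ((η k - gradS S x k : ℝ) : ℂ)) :
    levelSetHessian φ y ξ 0 = initialHessian S (y 0) := by
  have hXi : nablaXi φ (0, y 0, ξ 0) = 1 := by
    ext i j
    simp [nablaXi, fderiv_levelSet_initial hφ hS h0, eXi, Matrix.one_apply, Pi.single_apply,
      eq_comm]
    split_ifs <;> simp
  have hY : nablaY φ (0, y 0, ξ 0) = -initialHessian S (y 0) := by
    ext i j
    simp [nablaY, fderiv_levelSet_initial hφ hS h0, ey, initialHessian, hessS, Matrix.one_apply,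
      Pi.single_apply, eq_comm, add_comm]
    split_ifs <;> simp
  rw [levelSetHessian, hXi, hY, inv_one, mul_one, neg_neg]

end LevelSet

/-- First part: `M = −(∇_yφ)(∇_ξφ)⁻¹` satisfies the Riccati equation along the bicharacteristic.
Second part: for the level set initial data `φ(0,y,ξ) = −iy + (ξ − ∇S(y))` it is the Gaussian beam
Hessian, i.e. the one solution of the Riccati equation with initial value `∇²S(y(0)) + i Id`. -/
theorem hessian_from_level_set_riccati
    (h : V3 × V3 → ℝ) (hh : ContDiff ℝ 2 h)
    (φ : ℝ × V3 × V3 → Fin 3 → ℂ) (hφ : ContDiff ℝ 2 φ)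
    (hliou : SolvesLiouville h φ)
    (I : Set ℝ) (hI : I.OrdConnected)
    (y ξ : ℝ → V3) (hbi : IsBicharacteristicOn h y ξ I)
    (hinv : ∀ t ∈ I, IsUnit (nablaXi φ (t, y t, ξ t))) :
    SolvesRiccatiOn h y ξ I (levelSetHessian φ y ξ) ∧
    (∀ S : V3 → ℝ, ContDiff ℝ 2 S → (0 : ℝ) ∈ I →
      (∀ (x η : V3) (k : Fin 3),
        φ (0, x, η) k = -Complex.I * ((x k : ℝ) : ℂ) + ((η k - gradS S x k : ℝ) : ℂ)) →
      levelSetHessian φ y ξ 0 = initialHessian S (y 0) ∧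
      ∀ N : ℝ → Matrix (Fin 3) (Fin 3) ℂ, SolvesRiccatiOn h y ξ I N →
        N 0 = initialHessian S (y 0) →
        ∀ t ∈ I, N t = levelSetHessian φ y ξ t) := by
  have hA := fun t ht => hliou.hasDerivWithinAt_nablaY hh hφ hbi (t := t) ht
  have hB := fun t ht => hliou.hasDerivWithinAt_nablaXi hh hφ hbi (t := t) ht
  refine ⟨fun t ht i j => ?_, fun S hS hI0 h0 => ?_⟩
  · rw [riccatiRHS_eq]
    exact Matrix.hasDerivWithinAt_neg_mul_inv
      (A := fun τ => nablaY φ (τ, y τ, ξ τ)) (B := fun τ => nablaXi φ (τ, y τ, ξ τ))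
      (hA t ht) (hB t ht) (hinv t ht) i j
  · have hM0 := levelSetHessian_zero (y := y) (ξ := ξ) hφ hS h0
    refine ⟨hM0, fun N hN hN0 => ?_⟩
    simp only [SolvesRiccatiOn, riccatiRHS_eq] at hN
    exact Matrix.riccati_eq_neg_mul_inv hI hI0
      (A := fun τ => nablaY φ (τ, y τ, ξ τ)) (B := fun τ => nablaXi φ (τ, y τ, ξ τ))
      hA hB hinv
      (((continuous_Hyxi hh).matrix_map Complex.continuous_ofReal).neg.comp_continuousOn
        hbi.continuousOn)
      (((continuous_Hxixi hh).matrix_map Complex.continuous_ofReal).neg.comp_continuousOn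
        hbi.continuousOn)
      hN (hN0.trans hM0.symm)
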